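/- Let (X,d) be a metric space and T a firmly metrically nonspreading mapping of X into itself that has at least one fixed point. Then T is asymptotically regular, i.e., d(T^{n+1}x, T^{n}x) → 0 as n → ∞ for every x ∈ X. -/

import Mathlib

open Filter

/-!
Comparing `x` with a fixed point `u` turns the firmly metrically nonspreading inequality into
`d(Tx, x)² ≤ d(x, u)² - d(Tx, u)²`. Along an orbit the right-hand side telescopes, so the squared
steps are summable.
-/

theorem summable_of_add_succ_le {a b : ℕ → ℝ} (ha : ∀ n, 0 ≤ a n)
    (hb : BddBelow (Set.range b)) (hab : ∀ n, a n + b (n + 1) ≤ b n) : Summable a := by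
  obtain ⟨c, hc⟩ := hb
  refine summable_of_sum_range_le (c := b 0 - c) ha fun n => ?_
  calc ∑ i ∈ Finset.range n, a i
      ≤ ∑ i ∈ Finset.range n, (b i - b (i + 1)) :=
        Finset.sum_le_sum fun i _ => le_sub_iff_add_le.mpr (hab i)
    _ = b 0 - b n := Finset.sum_range_sub' b n
    _ ≤ b 0 - c := sub_le_sub_left (hc (Set.mem_range_self n)) _

section PseudoMetricSpace

variable {X : Type*} [PseudoMetricSpace X] {T : X → X} {u : X}

/-- Firmly metrically nonspreading self-mappings, the metric counterpart of firmly nonexpansive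
mappings of a Hilbert space. -/
def FirmlyMetricallyNonspreading (T : X → X) : Prop :=
  ∀ x y : X, 2 * dist (T x) (T y) ^ 2 + dist (T x) x ^ 2 + dist (T y) y ^ 2
    ≤ dist (T x) y ^ 2 + dist (T y) x ^ 2

theorem FirmlyMetricallyNonspreading.dist_sq_add_dist_sq_le
    (hT : FirmlyMetricallyNonspreading T) (hu : T u = u) (x : X) :
    dist (T x) x ^ 2 + dist (T x) u ^ 2 ≤ dist x u ^ 2 := by
  have h := hT x u
  rw [hu, dist_self, dist_comm u x] at h
  linarith

theorem summable_dist_iterate_succ_sq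
    (h : ∀ x, dist (T x) x ^ 2 + dist (T x) u ^ 2 ≤ dist x u ^ 2) (x : X) :
    Summable fun n : ℕ => dist (T^[n + 1] x) (T^[n] x) ^ 2 := by
  have bddBelow_dist_sq : BddBelow (Set.range fun n : ℕ => dist (T^[n] x) u ^ 2) :=
    ⟨0, Set.forall_mem_range.mpr fun _ => sq_nonneg _⟩
  refine summable_of_add_succ_le (fun _ => sq_nonneg _) bddBelow_dist_sq fun n => ?_
  simpa only [Function.iterate_succ_apply'] using h (T^[n] x)

theorem stmt_11_general
    (h : ∀ x, dist (T x) x ^ 2 + dist (T x) u ^ 2 ≤ dist x u ^ 2) (x : X) :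
    Tendsto (fun n : ℕ => dist (T^[n + 1] x) (T^[n] x)) atTop (nhds 0) := by
  have tendsto_sq := (summable_dist_iterate_succ_sq h x).tendsto_atTop_zero
  simpa only [Real.sqrt_sq dist_nonneg, Real.sqrt_zero] using tendsto_sq.sqrt

end PseudoMetricSpace

/-- Every firmly metrically nonspreading mapping of a metric space into itself with a
fixed point is asymptotically regular. -/
theorem stmt_11 {X : Type*} [MetricSpace X] (T : X → X)
    (hT : ∀ x y : X, 2 * dist (T x) (T y) ^ 2 + dist (T x) x ^ 2 + dist (T y) y ^ 2
      ≤ dist (T x) y ^ 2 + dist (T y) x ^ 2)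
    (hfix : ∃ u : X, T u = u) (x : X) :
    Tendsto (fun n : ℕ => dist (T^[n + 1] x) (T^[n] x)) atTop (nhds 0) := by
  obtain ⟨u, hu⟩ := hfix
  exact stmt_11_general (FirmlyMetricallyNonspreading.dist_sq_add_dist_sq_le hT hu) x
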